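/- Let Ω ⊆ ℝⁿ be a bounded open set with smooth boundary, T > 0, let f⃗ : Ω×ℝ×[0,T] → ℝ^{n+1} be bounded and continuous, and let u ∈ C^{2,1}(Q_T) ∩ C(Q̄_T) be a classical solution of the graphical mean curvature flow with transport term f⃗ and Neumann boundary condition, with initial data u₀. Then sup_{Q_T} |u| ≤ ( sup_{Ω×ℝ×[0,T]} |f⃗| ) · T + sup_Ω |u₀|. -/

import Mathlib

open MeasureTheory Metric Set Real Filter
open scoped RealInnerProductSpace ENNReal NNReal Topology ContDiff

noncomputable section

abbrev Eucl (n : ℕ) := EuclideanSpace ℝ (Fin n)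

variable {n : ℕ}

/-- spatial gradient of a time-dependent function -/
def sgrad (u : Eucl n → ℝ → ℝ) (x : Eucl n) (t : ℝ) : Eucl n :=
  gradient (fun y => u y t) x

/-- the area element `v = √(1+|du|²)` -/
def vel (u : Eucl n → ℝ → ℝ) (x : Eucl n) (t : ℝ) : ℝ :=
  Real.sqrt (1 + ‖sgrad u x t‖ ^ 2)

/-- divergence of a vector field on `ℝⁿ` -/
def divg (F : Eucl n → Eucl n) (x : Eucl n) : ℝ :=
  ∑ i, fderiv ℝ (fun y => F y i) x (EuclideanSpace.single i 1)

/-- the upward unit normal `(−du,1)/v` of the graph, as a vector in `ℝ^{n+1}` -/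
def unormal (u : Eucl n → ℝ → ℝ) (x : Eucl n) (t : ℝ) : Eucl (n + 1) :=
  (WithLp.equiv 2 (Fin (n + 1) → ℝ)).symm
    (Fin.snoc (fun i => -(sgrad u x t i) / vel u x t) (1 / vel u x t))

/-- the point `(x, u(x,t))` on the graph `Γ_t ⊆ ℝ^{n+1}` -/
def gpt (u : Eucl n → ℝ → ℝ) (x : Eucl n) (t : ℝ) : Eucl (n + 1) :=
  (WithLp.equiv 2 (Fin (n + 1) → ℝ)).symm (Fin.snoc (fun i => x i) (u x t))

/-- `f⃗ · n⃗` evaluated at `(x, u(x,t), t)` -/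
def fdotn (f : Eucl n → ℝ → ℝ → Eucl (n + 1)) (u : Eucl n → ℝ → ℝ)
    (x : Eucl n) (t : ℝ) : ℝ :=
  ⟪f x (u x t) t, unormal u x t⟫

/-- signed distance to `∂Ω` (negative inside `Ω`) -/
def sdist (Ω : Set (Eucl n)) (y : Eucl n) : ℝ := infDist y Ω - infDist y Ωᶜ

/-- the outward unit normal of `∂Ω`, as the gradient of the signed distance -/
def outNormal (Ω : Set (Eucl n)) (x : Eucl n) : Eucl n := gradient (sdist Ω) x

/-- `∂Ω` is smooth: the signed distance is smooth near the boundary. -/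
def SmoothBoundary (Ω : Set (Eucl n)) : Prop :=
  ∃ U : Set (Eucl n), IsOpen U ∧ frontier Ω ⊆ U ∧ ContDiffOn ℝ ∞ (sdist Ω) U

/-- classical solution of graphical MCF with transport term and Neumann condition -/
structure IsMCFSolution (Ω : Set (Eucl n)) (f : Eucl n → ℝ → ℝ → Eucl (n + 1))
    (u₀ : Eucl n → ℝ) (u : Eucl n → ℝ → ℝ) (T : ℝ) : Prop where
  reg_x : ∀ t ∈ Ioo (0 : ℝ) T, ContDiffOn ℝ 2 (fun x => u x t) Ω
  reg_t : ∀ x ∈ Ω, ∀ t ∈ Ioo (0 : ℝ) T, DifferentiableAt ℝ (u x) t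
  cont : ContinuousOn (fun p : Eucl n × ℝ => u p.1 p.2) (closure Ω ×ˢ Icc 0 T)
  grad_cont : ∀ t ∈ Ioo (0 : ℝ) T, ContinuousOn (fun x => sgrad u x t) (closure Ω)
  pde : ∀ x ∈ Ω, ∀ t ∈ Ioo (0 : ℝ) T,
    deriv (u x) t / vel u x t
      = divg (fun y => (vel u y t)⁻¹ • sgrad u y t) x + fdotn f u x t
  neumann : ∀ t ∈ Ioo (0 : ℝ) T, ∀ x ∈ frontier Ω, ⟪sgrad u x t, outNormal Ω x⟫ = 0
  init : ∀ x ∈ closure Ω, u x 0 = u₀ x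

/-- mixed norm `‖f⃗‖_{L^q_t L^p_x (a,b,Γ_t)}`, with the graph integral
`∫_{Γ_t} g dH^n = ∫_Ω g(x,u(x,t)) v dx`, as an extended real number -/
def mixedNormE (Ω : Set (Eucl n)) (f : Eucl n → ℝ → ℝ → Eucl (n + 1))
    (u : Eucl n → ℝ → ℝ) (p q a b : ℝ) : ℝ≥0∞ :=
  (∫⁻ t in Ioo a b,
      (∫⁻ x in Ω, (‖f x (u x t) t‖₊ : ℝ≥0∞) ^ p * ENNReal.ofReal (vel u x t)) ^ (q / p))
    ^ (1 / q)

/-!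
Compare `u` with `F t + S`. For small `ε > 0` and `c` slightly larger than `F`, the function
`w = u - ε g - c t` cannot attain its maximum over `closure Ω × [0, τ]` at a positive time, where
`g` is a `C²` function whose derivative along the outward normal is positive on `∂Ω` (a `C²`
extension of the signed distance near `∂Ω`). At a boundary point the Neumann condition would give
`w` a negative outward derivative. At an interior point `du = ε dg` and `D²u ≤ ε D²g`, so
`v div(du/v) + F v ≤ F + O(ε) < c`, while `∂ₜu ≥ c` at a maximum. Hence `w` is bounded by its
initial values, and `ε → 0` gives `u ≤ F t + S`. The lower bound is the same statement for `-u`.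
-/

section SecondDerivativeTest

lemma nonpos_of_isLocalMax_of_hasDerivAt {f f' : ℝ → ℝ} {f'' a : ℝ} (hmax : IsLocalMax f a)
    (hf : ∀ᶠ s in 𝓝 a, HasDerivAt f (f' s) s) (hf' : HasDerivAt f' f'' a) : f'' ≤ 0 := by
  by_contra! hpos
  have hderiv : deriv f =ᶠ[𝓝 a] f' := hf.mono fun s hs => hs.deriv
  have hderiv₂ : deriv (deriv f) a = f'' := by rw [hderiv.deriv_eq, hf'.deriv]
  have hmin : IsLocalMin f a := isLocalMin_of_deriv_deriv_pos (hderiv₂ ▸ hpos)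
    hmax.deriv_eq_zero hf.self_of_nhds.continuousAt
  have hconst : f =ᶠ[𝓝 a] fun _ => f a := by
    filter_upwards [hmin, hmax] with s hge hle using le_antisymm hle hge
  have hzero : deriv (deriv f) a = 0 := by simp [hconst.deriv.deriv_eq]
  linarith

lemma nonneg_of_isMaxOn_Icc_right {f : ℝ → ℝ} {f' a b : ℝ} (hab : a < b)
    (hmax : IsMaxOn f (Icc a b) b) (hf : HasDerivAt f f' b) : 0 ≤ f' := by
  have hdir : a - b ∈ posTangentConeAt (Icc a b) b := by
    apply sub_mem_posTangentConeAt_of_segment_subset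
    rw [segment_symm, segment_eq_Icc hab.le]
  have hle := hmax.localize.hasFDerivWithinAt_nonpos hf.hasDerivWithinAt.hasFDerivWithinAt hdir
  simp only [ContinuousLinearMap.toSpanSingleton_apply, smul_eq_mul] at hle
  nlinarith

variable {E : Type*} [NormedAddCommGroup E] [InnerProductSpace ℝ E] [CompleteSpace E]

lemma eventually_hasGradientAt {f : E → ℝ} {x : E} {k : WithTop ℕ∞} (hf : ContDiffAt ℝ k f x)
    (hk : 1 ≤ k) : ∀ᶠ y in 𝓝 x, HasGradientAt f (gradient f y) y :=
  ((hf.of_le hk).eventually (by simp)).mono fun _ hy =>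
    (hy.differentiableAt one_ne_zero).hasGradientAt

lemma hasGradientAt_sub_const_mul {f g : E → ℝ} {f' g' x : E} (hf : HasGradientAt f f' x)
    (hg : HasGradientAt g g' x) (ε : ℝ) :
    HasGradientAt (fun y => f y - ε * g y) (f' - ε • g') x := by
  rw [hasGradientAt_iff_hasFDerivAt] at *
  simpa using hf.fun_sub (hg.const_mul ε)

lemma hasDerivAt_comp_line {w : E → ℝ} {w' x d : E} {s : ℝ} (hw : HasGradientAt w w' (x + s • d)) :
    HasDerivAt (fun r : ℝ => w (x + r • d)) ⟪w', d⟫ s := by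
  have hline : HasDerivAt (fun r : ℝ => x + r • d) d s := by
    simpa using ((hasDerivAt_id s).smul_const d).const_add x
  simpa [Function.comp_def] using hw.hasFDerivAt.comp_hasDerivAt s hline

lemma inner_apply_self_nonpos_of_isLocalMax {w : E → ℝ} {G : E → E} {A : E →L[ℝ] E} {x : E}
    (hmax : IsLocalMax w x) (hw : ∀ᶠ y in 𝓝 x, HasGradientAt w (G y) y)
    (hG : HasFDerivAt G A x) (d : E) : ⟪A d, d⟫ ≤ 0 := by
  have hline : Tendsto (fun s : ℝ => x + s • d) (𝓝 0) (𝓝 x) :=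
    Continuous.tendsto' (by fun_prop) _ _ (by simp)
  refine nonpos_of_isLocalMax_of_hasDerivAt (f := fun s : ℝ => w (x + s • d))
    (f' := fun s => ⟪G (x + s • d), d⟫) (a := 0) ?_ ?_ ?_
  · filter_upwards [hline.eventually hmax] with s hs
    simpa using hs
  · filter_upwards [hline.eventually hw] with s hs using hasDerivAt_comp_line hs
  · have hGline : HasDerivAt (fun s : ℝ => G (x + s • d)) (A d) 0 := hG.hasLineDerivAt d
    simpa using hGline.inner ℝ (hasDerivAt_const (0 : ℝ) d)

lemma inner_apply_self_le_of_isLocalMax_sub {f g : E → ℝ} {P Q : E → E} {A B : E →L[ℝ] E}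
    {x : E} {ε : ℝ} (hε : 0 ≤ ε) (hmax : IsLocalMax (fun y => f y - ε * g y) x)
    (hf : ∀ᶠ y in 𝓝 x, HasGradientAt f (P y) y) (hg : ∀ᶠ y in 𝓝 x, HasGradientAt g (Q y) y)
    (hP : HasFDerivAt P A x) (hQ : HasFDerivAt Q B x) (d : E) :
    ⟪A d, d⟫ ≤ ε * ‖B‖ * ‖d‖ ^ 2 := by
  have hgrad : ∀ᶠ y in 𝓝 x, HasGradientAt (fun y => f y - ε * g y) (P y - ε • Q y) y := by
    filter_upwards [hf, hg] with y hfy hgy using hasGradientAt_sub_const_mul hfy hgy ε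
  have hdiff : ⟪A d, d⟫ - ε * ⟪B d, d⟫ ≤ 0 := by
    simpa [inner_sub_left, real_inner_smul_left] using
      inner_apply_self_nonpos_of_isLocalMax hmax hgrad (hP.fun_sub (hQ.const_smul ε)) d
  have hB : ⟪B d, d⟫ ≤ ‖B‖ * ‖d‖ ^ 2 := calc
    ⟪B d, d⟫ ≤ ‖B d‖ * ‖d‖ := real_inner_le_norm _ _
    _ ≤ ‖B‖ * ‖d‖ * ‖d‖ := by gcongr; exact B.le_opNorm d
    _ = ‖B‖ * ‖d‖ ^ 2 := by ring
  nlinarith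

lemma eq_smul_of_isLocalMax_sub {f g : E → ℝ} {f' g' x : E} {ε : ℝ}
    (hmax : IsLocalMax (fun y => f y - ε * g y) x) (hf : HasGradientAt f f' x)
    (hg : HasGradientAt g g' x) : f' = ε • g' := by
  have hzero := hmax.hasFDerivAt_eq_zero (hasGradientAt_sub_const_mul hf hg ε).hasFDerivAt
  rwa [LinearIsometryEquiv.map_eq_zero_iff, sub_eq_zero] at hzero

end SecondDerivativeTest

section BoundaryMaximum

variable {E : Type*} [NormedAddCommGroup E] [InnerProductSpace ℝ E]

/-- The vector `ν` at the point `x` points out of `Ω`: moving a little from `x` against `ν` leads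
into `Ω`. No regularity of `∂Ω` is involved and `ν` need not be normal to it. -/
def PointsOutward (Ω : Set E) (x ν : E) : Prop :=
  ∀ᶠ s in 𝓝[>] (0 : ℝ), x + s • (-ν) ∈ Ω

lemma tendsto_add_smul_nhdsGT (x d : E) :
    Tendsto (fun s : ℝ => x + s • d) (𝓝[>] 0) (𝓝 x) :=
  (Continuous.tendsto' (by fun_prop) _ _ (by simp)).mono_left nhdsWithin_le_nhds

lemma PointsOutward.mem_closure {Ω : Set E} {x ν : E} (hν : PointsOutward Ω x ν) :
    x ∈ closure Ω :=
  mem_closure_of_tendsto (tendsto_add_smul_nhdsGT x (-ν)) hν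

variable [CompleteSpace E]

lemma inner_nonneg_of_isMaxOn_closure {Ω : Set E} {w : E → ℝ} {G : E → E} {x ν : E}
    (hν : PointsOutward Ω x ν) (hmax : IsMaxOn w (closure Ω) x)
    (hw : ContinuousOn w (closure Ω)) (hG : ContinuousOn G (closure Ω))
    (hgrad : ∀ y ∈ Ω, HasGradientAt w (G y) y) : 0 ≤ ⟪G x, ν⟫ := by
  have hx : x ∈ closure Ω := hν.mem_closure
  have hline : Tendsto (fun s : ℝ => x + s • (-ν)) (𝓝[>] 0) (𝓝[closure Ω] x) :=
    tendsto_nhdsWithin_iff.2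
      ⟨tendsto_add_smul_nhdsGT x (-ν), hν.mono fun s hs => subset_closure hs⟩
  have hlim : Tendsto (deriv fun s : ℝ => w (x + s • (-ν))) (𝓝[>] 0) (𝓝 ⟪G x, -ν⟫) := by
    refine (((hG x hx).tendsto.comp hline).inner tendsto_const_nhds).congr' ?_
    filter_upwards [hν] with s hs using (hasDerivAt_comp_line (hgrad _ hs)).deriv.symm
  have hderiv : HasDerivWithinAt (fun s : ℝ => w (x + s • (-ν))) ⟪G x, -ν⟫ (Ici 0) 0 := by
    refine hasDerivWithinAt_Ici_of_tendsto_deriv (s := {s : ℝ | x + s • (-ν) ∈ Ω})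
      (fun s hs => ?_) ?_ hν hlim
    · exact (hasDerivAt_comp_line (hgrad _ hs)).differentiableAt.differentiableWithinAt
    · exact (hw x hx).comp_of_eq (by fun_prop) (fun s hs => subset_closure hs) (by simp)
  have hmax' : IsLocalMaxOn (fun s : ℝ => w (x + s • (-ν))) (Ici 0) 0 := by
    have hν₀ : ∀ᶠ s in 𝓝[≥] (0 : ℝ), x + s • (-ν) ∈ closure Ω := by
      rw [← Ioi_insert, nhdsWithin_insert, eventually_sup]
      exact ⟨by simpa using hx, hν.mono fun s hs => subset_closure hs⟩
    filter_upwards [hν₀] with s hs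
    simpa using hmax hs
  have hdir : (1 : ℝ) ∈ posTangentConeAt (Ici 0) 0 :=
    mem_posTangentConeAt_of_segment_subset (by simp [segment_eq_Icc, Icc_subset_Ici_self])
  simpa using hmax'.hasFDerivWithinAt_nonpos hderiv.hasFDerivWithinAt hdir

lemma pointsOutward_of_hasGradientAt {Ω : Set E} {w : E → ℝ} {w' x ν : E}
    (hw : HasGradientAt w w' x) (hx : w x = 0) (hΩ : ∀ y, w y < 0 → y ∈ Ω) (hν : 0 < ⟪w', ν⟫) :
    PointsOutward Ω x ν := by
  have hline : HasDerivAt (fun s : ℝ => w (x + s • (-ν))) ⟪w', -ν⟫ 0 :=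
    hasDerivAt_comp_line (by simpa using hw)
  have hsign := eventually_nhdsWithin_sign_eq_of_deriv_neg
    (f := fun s : ℝ => w (x + s • (-ν))) (x₀ := 0)
    (by rw [hline.deriv, inner_neg_right]; linarith) (by simpa using hx)
  filter_upwards [hsign.filter_mono nhdsWithin_le_nhds, self_mem_nhdsWithin] with s hs hpos
  rw [zero_sub, sign_neg (neg_neg_of_pos hpos), sign_eq_neg_one_iff] at hs
  exact hΩ _ hs

end BoundaryMaximum

section MeanCurvatureOperator

variable {E : Type*} [NormedAddCommGroup E] [InnerProductSpace ℝ E]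

/-- The graphical mean curvature operator `v div(du/v) = tr A - ⟪A p, p⟫ / (1 + |p|²)` in
nondivergence form, as a function of the gradient `p = du` and the Hessian `A = D²u`. -/
def meanCurvatureOp (p : E) (A : E →L[ℝ] E) : ℝ :=
  LinearMap.trace ℝ E A - ⟪A p, p⟫ / (1 + ‖p‖ ^ 2)

lemma trace_eq_sum_inner_apply_self {ι : Type*} [Fintype ι] (b : OrthonormalBasis ι ℝ E)
    (A : E →L[ℝ] E) : LinearMap.trace ℝ E A = ∑ i, ⟪A (b i), b i⟫ := by
  rw [LinearMap.trace_eq_sum_inner (A : E →ₗ[ℝ] E) b]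
  exact Finset.sum_congr rfl fun i _ => real_inner_comm _ _

variable [FiniteDimensional ℝ E]

lemma inner_apply_self_le_trace_mul {A : E →L[ℝ] E} (hA : ∀ d, 0 ≤ ⟪A d, d⟫) (p : E) :
    ⟪A p, p⟫ ≤ LinearMap.trace ℝ E A * ‖p‖ ^ 2 := by
  rcases eq_or_ne p 0 with rfl | hp
  · simp
  have hunit : Orthonormal ℝ ((↑) : ({‖p‖⁻¹ • p} : Set E) → E) := by
    simp [norm_smul, hp]
  obtain ⟨s, b, hps, hb⟩ := hunit.exists_orthonormalBasis_extension
  let i : s := ⟨‖p‖⁻¹ • p, hps (mem_singleton _)⟩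
  have hpi : p = ‖p‖ • b i := by simp [hb, i, hp]
  calc ⟪A p, p⟫ = ⟪A (b i), b i⟫ * ‖p‖ ^ 2 := by
        nth_rw 1 2 [hpi]
        simp only [map_smul, real_inner_smul_left, real_inner_smul_right]
        ring
    _ ≤ (∑ j, ⟪A (b j), b j⟫) * ‖p‖ ^ 2 := by
        gcongr
        exact Finset.single_le_sum (fun j _ => hA (b j)) (Finset.mem_univ i)
    _ = LinearMap.trace ℝ E A * ‖p‖ ^ 2 := by rw [trace_eq_sum_inner_apply_self b]

lemma trace_nonneg_of_inner_apply_self_nonneg {A : E →L[ℝ] E} (hA : ∀ d, 0 ≤ ⟪A d, d⟫) :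
    0 ≤ LinearMap.trace ℝ E A := by
  rw [trace_eq_sum_inner_apply_self (stdOrthonormalBasis ℝ E)]
  exact Finset.sum_nonneg fun i _ => hA _

lemma meanCurvatureOp_nonneg {A : E →L[ℝ] E} (hA : ∀ d, 0 ≤ ⟪A d, d⟫) (p : E) :
    0 ≤ meanCurvatureOp p A := by
  rw [meanCurvatureOp, sub_nonneg, div_le_iff₀ (by positivity)]
  nlinarith [inner_apply_self_le_trace_mul hA p, trace_nonneg_of_inner_apply_self_nonneg hA]

lemma meanCurvatureOp_le_of_inner_le {A : E →L[ℝ] E} {K : ℝ} (hK : 0 ≤ K)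
    (hA : ∀ d, ⟪A d, d⟫ ≤ K * ‖d‖ ^ 2) (p : E) :
    meanCurvatureOp p A ≤ Module.finrank ℝ E * K := by
  have hnonneg : 0 ≤ meanCurvatureOp p (K • ContinuousLinearMap.id ℝ E - A) := by
    refine meanCurvatureOp_nonneg (fun d => ?_) p
    simpa [inner_sub_left, real_inner_smul_left] using hA d
  have hdiff : meanCurvatureOp p (K • ContinuousLinearMap.id ℝ E - A) =
      Module.finrank ℝ E * K - K * ‖p‖ ^ 2 / (1 + ‖p‖ ^ 2) - meanCurvatureOp p A := by
    simp [meanCurvatureOp, inner_sub_left, real_inner_smul_left]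
    ring
  have hfrac : 0 ≤ K * ‖p‖ ^ 2 / (1 + ‖p‖ ^ 2) := by positivity
  linarith

end MeanCurvatureOperator

section EuclideanCalculus

lemma divg_eq_trace {G : Eucl n → Eucl n} {A : Eucl n →L[ℝ] Eucl n} {x : Eucl n}
    (hG : HasFDerivAt G A x) : divg G x = LinearMap.trace ℝ (Eucl n) A := by
  rw [trace_eq_sum_inner_apply_self (EuclideanSpace.basisFun (Fin n) ℝ)]
  refine Finset.sum_congr rfl fun i _ => ?_
  have hcoord : HasFDerivAt (fun y => G y i) ((EuclideanSpace.proj i : Eucl n →L[ℝ] ℝ) ∘L A) x :=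
    (EuclideanSpace.proj i : Eucl n →L[ℝ] ℝ).hasFDerivAt.comp x hG
  simp [hcoord.fderiv, EuclideanSpace.inner_single_right]

lemma divg_smul {φ : Eucl n → ℝ} {φ' : Eucl n →L[ℝ] ℝ} {G : Eucl n → Eucl n}
    {A : Eucl n →L[ℝ] Eucl n} {x : Eucl n} (hφ : HasFDerivAt φ φ' x) (hG : HasFDerivAt G A x) :
    divg (fun y => φ y • G y) x = φ x * LinearMap.trace ℝ (Eucl n) A + φ' (G x) := by
  rw [divg_eq_trace (hφ.fun_smul hG)]
  simp

lemma divg_neg (G : Eucl n → Eucl n) (x : Eucl n) : divg (fun y => -G y) x = -divg G x := by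
  simp [divg, fderiv_fun_neg]

lemma hasFDerivAt_inv_sqrt_one_add_norm_sq {E : Type*} [NormedAddCommGroup E]
    [InnerProductSpace ℝ E] {G : E → E} {A : E →L[ℝ] E} {x : E} (hG : HasFDerivAt G A x) :
    HasFDerivAt (fun y => (√(1 + ‖G y‖ ^ 2))⁻¹)
      (-(√(1 + ‖G x‖ ^ 2) ^ 3)⁻¹ • (innerSL ℝ (G x)).comp A) x := by
  have hsqrt := (hG.norm_sq.const_add 1).sqrt (by positivity : 1 + ‖G x‖ ^ 2 ≠ 0)
  have hpos : √(1 + ‖G x‖ ^ 2) ≠ 0 := by positivity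
  refine ((hasDerivAt_inv hpos).comp_hasFDerivAt x hsqrt).congr_fderiv ?_
  ext d
  simp only [one_div, mul_inv_rev, neg_smul, neg_apply, smul_apply,
    ContinuousLinearMap.comp_apply, coe_innerSL_apply, nsmul_eq_mul, Nat.cast_ofNat, smul_eq_mul]
  field_simp

lemma sqrt_mul_divg_inv_sqrt_smul {G : Eucl n → Eucl n} {A : Eucl n →L[ℝ] Eucl n} {x : Eucl n}
    (hG : HasFDerivAt G A x) :
    √(1 + ‖G x‖ ^ 2) * divg (fun y => (√(1 + ‖G y‖ ^ 2))⁻¹ • G y) x =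
      meanCurvatureOp (G x) A := by
  have hpos : 0 < 1 + ‖G x‖ ^ 2 := by positivity
  have hv : √(1 + ‖G x‖ ^ 2) ^ 2 = 1 + ‖G x‖ ^ 2 := Real.sq_sqrt hpos.le
  have hv₀ : √(1 + ‖G x‖ ^ 2) ≠ 0 := by positivity
  rw [divg_smul (hasFDerivAt_inv_sqrt_one_add_norm_sq hG) hG, meanCurvatureOp]
  generalize √(1 + ‖G x‖ ^ 2) = v at hv hv₀ ⊢
  rw [← hv]
  simp only [neg_smul, neg_apply, smul_apply, ContinuousLinearMap.comp_apply, coe_innerSL_apply,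
    smul_eq_mul, real_inner_comm]
  field_simp
  ring

lemma gradient_apply (g : Eucl n → ℝ) (x : Eucl n) (i : Fin n) :
    gradient g x i = fderiv ℝ g x (EuclideanSpace.single i 1) := by
  rw [← inner_gradient_left, EuclideanSpace.inner_single_right]
  simp

lemma contDiffAt_gradient {k m : WithTop ℕ∞} {g : Eucl n → ℝ} {x : Eucl n}
    (hg : ContDiffAt ℝ m g x) (hkm : k + 1 ≤ m) : ContDiffAt ℝ k (gradient g) x := by
  rw [contDiffAt_euclidean]
  simp only [gradient_apply]
  exact fun i => (hg.fderiv_right hkm).clm_apply contDiffAt_const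

lemma hasFDerivAt_gradient {g : Eucl n → ℝ} {x : Eucl n} (hg : ContDiffAt ℝ 2 g x) :
    HasFDerivAt (gradient g) (fderiv ℝ (gradient g) x) x :=
  ((contDiffAt_gradient (k := 1) hg (by norm_num)).differentiableAt one_ne_zero).hasFDerivAt

lemma vel_pos (u : Eucl n → ℝ → ℝ) (x : Eucl n) (t : ℝ) : 0 < vel u x t := by
  unfold vel
  positivity

lemma vel_sq (u : Eucl n → ℝ → ℝ) (x : Eucl n) (t : ℝ) :
    vel u x t ^ 2 = 1 + ‖sgrad u x t‖ ^ 2 :=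
  Real.sq_sqrt (by positivity)

lemma one_le_vel (u : Eucl n → ℝ → ℝ) (x : Eucl n) (t : ℝ) : 1 ≤ vel u x t :=
  Real.one_le_sqrt.2 (by simp)

lemma vel_le_one_add_norm (u : Eucl n → ℝ → ℝ) (x : Eucl n) (t : ℝ) :
    vel u x t ≤ 1 + ‖sgrad u x t‖ := by
  refine Real.sqrt_le_iff.2 ⟨by positivity, ?_⟩
  nlinarith [norm_nonneg (sgrad u x t)]

lemma mul_vel_le (F : ℝ) (u : Eucl n → ℝ → ℝ) (x : Eucl n) (t : ℝ) :
    F * vel u x t ≤ F + |F| * ‖sgrad u x t‖ := by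
  have h₁ : F * (vel u x t - 1) ≤ |F| * (vel u x t - 1) :=
    mul_le_mul_of_nonneg_right (le_abs_self F) (by linarith [one_le_vel u x t])
  have h₂ : |F| * (vel u x t - 1) ≤ |F| * ‖sgrad u x t‖ := by
    gcongr
    linarith [vel_le_one_add_norm u x t]
  linarith

lemma sgrad_neg (u : Eucl n → ℝ → ℝ) (x : Eucl n) (t : ℝ) :
    sgrad (fun y s => -u y s) x t = -sgrad u x t := by
  simp [sgrad, gradient, fderiv_fun_neg]

lemma vel_neg (u : Eucl n → ℝ → ℝ) (x : Eucl n) (t : ℝ) :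
    vel (fun y s => -u y s) x t = vel u x t := by
  simp [vel, sgrad_neg]

lemma norm_unormal (u : Eucl n → ℝ → ℝ) (x : Eucl n) (t : ℝ) : ‖unormal u x t‖ = 1 := by
  have hv : vel u x t ≠ 0 := (vel_pos u x t).ne'
  rw [← sq_eq_sq₀ (norm_nonneg _) zero_le_one, EuclideanSpace.real_norm_sq_eq,
    Fin.sum_univ_castSucc]
  simp only [unormal, WithLp.equiv_symm_apply, Fin.snoc_castSucc, Fin.snoc_last, div_pow, neg_sq]
  rw [← Finset.sum_div, ← EuclideanSpace.real_norm_sq_eq]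
  field_simp
  linarith [vel_sq u x t]

lemma abs_fdotn_le_norm (f : Eucl n → ℝ → ℝ → Eucl (n + 1)) (u : Eucl n → ℝ → ℝ) (x : Eucl n)
    (t : ℝ) : |fdotn f u x t| ≤ ‖f x (u x t) t‖ := by
  simpa [fdotn, norm_unormal] using abs_real_inner_le_norm (f x (u x t) t) (unormal u x t)

end EuclideanCalculus

section SignedDistance

variable {Ω : Set (Eucl n)} {x y : Eucl n}

lemma mem_of_sdist_neg (hy : sdist Ω y < 0) : y ∈ Ω := by
  by_contra hyΩ
  rw [sdist, infDist_zero_of_mem (show y ∈ Ωᶜ from hyΩ), sub_zero] at hy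
  exact hy.not_ge infDist_nonneg

lemma sdist_eq_zero_of_mem_frontier (hx : x ∈ frontier Ω) : sdist Ω x = 0 := by
  rw [frontier_eq_closure_inter_closure] at hx
  rw [sdist, infDist_zero_of_mem_closure hx.1, infDist_zero_of_mem_closure hx.2, sub_zero]

lemma exists_notMem_dist_le_sdist_sub (hΩ : IsOpen Ω) (hy : y ∈ Ω) (hx : x ∉ Ω) :
    ∃ p ∉ Ω, dist y p ≤ dist y x ∧ dist y p ≤ sdist Ω p - sdist Ω y := by
  obtain ⟨p, hp, hyp⟩ := hΩ.isClosed_compl.exists_infDist_eq_dist ⟨x, hx⟩ y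
  refine ⟨p, hp, hyp ▸ infDist_le_dist_of_mem hx, ?_⟩
  rw [sdist, sdist, infDist_zero_of_mem hp, infDist_zero_of_mem hy, hyp]
  linarith [infDist_nonneg (x := p) (s := Ω)]

lemma one_le_norm_of_hasStrictFDerivAt_sdist {L : Eucl n →L[ℝ] ℝ} (hΩ : IsOpen Ω)
    (hx : x ∈ frontier Ω) (hL : HasStrictFDerivAt (sdist Ω) L x) : 1 ≤ ‖L‖ := by
  by_contra! hlt
  obtain ⟨K, hLK, hK⟩ := exists_between (show ‖L‖₊ < 1 from hlt)
  obtain ⟨V, hV, hlip⟩ := hL.exists_lipschitzOnWith_of_nnnorm_lt K hLK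
  obtain ⟨r, hr, hrV⟩ := Metric.mem_nhds_iff.1 hV
  rw [hΩ.frontier_eq] at hx
  obtain ⟨y, hy, hxy⟩ := Metric.mem_closure_iff.1 hx.1 (r / 2) (half_pos hr)
  obtain ⟨p, hp, hpx, hpy⟩ := exists_notMem_dist_le_sdist_sub hΩ hy hx.2
  have hyx : dist y x < r / 2 := dist_comm x y ▸ hxy
  have hpV : p ∈ V := hrV <| by
    rw [mem_ball]
    linarith [dist_triangle_left p x y]
  have hyV : y ∈ V := hrV <| by
    rw [mem_ball]
    linarith
  have hpos : 0 < dist y p := dist_pos.2 fun h => hp (h ▸ hy)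
  have hle : sdist Ω p - sdist Ω y ≤ K * dist y p := by
    rw [dist_comm y p]
    exact (le_abs_self _).trans (hlip.dist_le_mul p hpV y hyV)
  have hlt : K * dist y p < 1 * dist y p := by gcongr; exact hK
  linarith

lemma SmoothBoundary.contDiffAt (hΩ : SmoothBoundary Ω) (hx : x ∈ frontier Ω) :
    ContDiffAt ℝ ∞ (sdist Ω) x := by
  obtain ⟨U, hU, hfrontier, hsmooth⟩ := hΩ
  exact hsmooth.contDiffAt (hU.mem_nhds (hfrontier hx))

lemma outNormal_ne_zero (hΩ : IsOpen Ω) (hx : x ∈ frontier Ω)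
    (hsdist : ContDiffAt ℝ 1 (sdist Ω) x) : outNormal Ω x ≠ 0 := by
  intro hzero
  have hnorm := one_le_norm_of_hasStrictFDerivAt_sdist hΩ hx
    (hsdist.hasStrictFDerivAt one_ne_zero)
  rw [← toDual_gradient, ← outNormal, hzero] at hnorm
  norm_num at hnorm

lemma pointsOutward_outNormal (hΩ : IsOpen Ω) (hx : x ∈ frontier Ω)
    (hsdist : ContDiffAt ℝ 1 (sdist Ω) x) : PointsOutward Ω x (outNormal Ω x) :=
  pointsOutward_of_hasGradientAt (hsdist.differentiableAt one_ne_zero).hasGradientAt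
    (sdist_eq_zero_of_mem_frontier hx) (fun _ => mem_of_sdist_neg)
    (real_inner_self_pos.2 (outNormal_ne_zero hΩ hx hsdist))

end SignedDistance

section Barrier

lemma exists_contDiff_eventuallyEq_nhdsSet {E F : Type*} [NormedAddCommGroup E] [NormedSpace ℝ E]
    [FiniteDimensional ℝ E] [NormedAddCommGroup F] [NormedSpace ℝ F] {k : ℕ} {C : Set E}
    (hC : IsClosed C) {φ : E → F} (hφ : ∀ x ∈ C, ContDiffAt ℝ k φ x) :
    ∃ g : E → F, ContDiff ℝ k g ∧ g =ᶠ[𝓝ˢ C] φ := by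
  have hopen : IsOpen {x | ContDiffAt ℝ k φ x} :=
    isOpen_iff_mem_nhds.2 fun x (hx : ContDiffAt ℝ k φ x) => hx.eventually (by simp)
  obtain ⟨χ, hχ₀, hχ₁, -⟩ := exists_contMDiffMap_zero_one_nhds_of_isClosed (n := k)
    (modelWithCornersSelf ℝ E) hopen.isClosed_compl hC (disjoint_compl_left_iff_subset.2 hφ)
  refine ⟨fun y => χ y • φ y, contDiff_iff_contDiffAt.2 fun x => ?_, ?_⟩
  · by_cases hx : ContDiffAt ℝ k φ x
    · exact χ.contMDiff.contDiff.contDiffAt.smul hx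
    · refine (contDiffAt_const (c := 0)).congr_of_eventuallyEq ?_
      filter_upwards [hχ₀.filter_mono (nhds_le_nhdsSet hx)] with y hy
      rw [hy, zero_smul]
  · filter_upwards [hχ₁] with y hy
    rw [hy, one_smul]

/-- A `C²` function `g` whose derivative along `ν` is positive on `∂Ω`. It plays the role of the
boundary barrier: subtracting a small multiple of `g` turns a weak Neumann inequality along `ν`
into a strict one. -/
structure IsNeumannBarrier (Ω : Set (Eucl n)) (ν : Eucl n → Eucl n) (g : Eucl n → ℝ) : Prop where
  contDiff : ContDiff ℝ 2 g
  inner_pos : ∀ x ∈ frontier Ω, 0 < ⟪gradient g x, ν x⟫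

lemma exists_isNeumannBarrier_outNormal {Ω : Set (Eucl n)} (hΩ : IsOpen Ω)
    (hsdist : ∀ x ∈ frontier Ω, ContDiffAt ℝ 2 (sdist Ω) x) :
    ∃ g, IsNeumannBarrier Ω (outNormal Ω) g := by
  obtain ⟨g, hg, hgΩ⟩ := exists_contDiff_eventuallyEq_nhdsSet isClosed_frontier hsdist
  refine ⟨g, hg, fun x hx => ?_⟩
  have hgrad : gradient g x = outNormal Ω x :=
    (hgΩ.filter_mono (nhds_le_nhdsSet hx)).gradient_eq
  rw [hgrad, real_inner_self_pos]
  exact outNormal_ne_zero hΩ hx ((hsdist x hx).of_le one_le_two)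

end Barrier

section Subsolution

/-- A subsolution `∂ₜu ≤ v div(du/v) + F v` of the graphical mean curvature flow with constant
forcing `F`, under the Neumann inequality `⟪du, ν⟫ ≤ 0` on `∂Ω`. Both `u` and `-u` are of this kind
when `u` is a solution with transport term bounded by `F`. The field `ν` is arbitrary. -/
structure IsMCFSubsolution (Ω : Set (Eucl n)) (ν : Eucl n → Eucl n) (F : ℝ)
    (u : Eucl n → ℝ → ℝ) (T : ℝ) : Prop where
  reg_x : ∀ t ∈ Ioo (0 : ℝ) T, ContDiffOn ℝ 2 (fun x => u x t) Ω
  reg_t : ∀ x ∈ Ω, ∀ t ∈ Ioo (0 : ℝ) T, DifferentiableAt ℝ (u x) t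
  cont : ContinuousOn (fun p : Eucl n × ℝ => u p.1 p.2) (closure Ω ×ˢ Icc 0 T)
  grad_cont : ∀ t ∈ Ioo (0 : ℝ) T, ContinuousOn (fun x => sgrad u x t) (closure Ω)
  pde_le : ∀ x ∈ Ω, ∀ t ∈ Ioo (0 : ℝ) T,
    deriv (u x) t / vel u x t ≤ divg (fun y => (vel u y t)⁻¹ • sgrad u y t) x + F
  neumann_le : ∀ t ∈ Ioo (0 : ℝ) T, ∀ x ∈ frontier Ω, ⟪sgrad u x t, ν x⟫ ≤ 0

namespace IsMCFSubsolution

variable {Ω : Set (Eucl n)} {ν : Eucl n → Eucl n} {F T : ℝ} {u : Eucl n → ℝ → ℝ}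

lemma contDiffAt (hu : IsMCFSubsolution Ω ν F u T) (hΩ : IsOpen Ω) {x : Eucl n} (hx : x ∈ Ω)
    {t : ℝ} (ht : t ∈ Ioo 0 T) : ContDiffAt ℝ 2 (fun y => u y t) x :=
  (hu.reg_x t ht).contDiffAt (hΩ.mem_nhds hx)

lemma continuousOn_slice (hu : IsMCFSubsolution Ω ν F u T) {t : ℝ} (ht : t ∈ Icc 0 T) :
    ContinuousOn (fun x => u x t) (closure Ω) :=
  hu.cont.comp (f := fun x => (x, t)) (by fun_prop) fun _ hx => ⟨hx, ht⟩

lemma deriv_le (hu : IsMCFSubsolution Ω ν F u T) {x : Eucl n} (hx : x ∈ Ω) {t : ℝ}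
    (ht : t ∈ Ioo 0 T) {A : Eucl n →L[ℝ] Eucl n}
    (hA : HasFDerivAt (fun y => sgrad u y t) A x) :
    deriv (u x) t ≤ meanCurvatureOp (sgrad u x t) A + F * vel u x t := by
  have hpde := (div_le_iff₀ (vel_pos u x t)).1 (hu.pde_le x hx t ht)
  have hop : vel u x t * divg (fun y => (vel u y t)⁻¹ • sgrad u y t) x =
      meanCurvatureOp (sgrad u x t) A := sqrt_mul_divg_inv_sqrt_smul hA
  linarith

lemma not_isMaxOn_of_mem_frontier (hu : IsMCFSubsolution Ω ν F u T) (hΩ : IsOpen Ω)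
    {g : Eucl n → ℝ} (hg : IsNeumannBarrier Ω ν g) {x : Eucl n} (hx : x ∈ frontier Ω)
    (hν : PointsOutward Ω x (ν x)) {t : ℝ} (ht : t ∈ Ioo 0 T) {ε : ℝ} (hε : 0 < ε) :
    ¬ IsMaxOn (fun y => u y t - ε * g y) (closure Ω) x := by
  intro hmax
  have hcont : ContinuousOn (fun y => u y t - ε * g y) (closure Ω) :=
    (hu.continuousOn_slice (Ioo_subset_Icc_self ht)).sub
      (continuous_const.mul hg.contDiff.continuous).continuousOn
  have hgradcont : Continuous (gradient g) := continuous_iff_continuousAt.2 fun y =>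
    (hasFDerivAt_gradient hg.contDiff.contDiffAt).continuousAt
  have hgrad : ∀ y ∈ Ω,
      HasGradientAt (fun y => u y t - ε * g y) (sgrad u y t - ε • gradient g y) y := fun y hy =>
    hasGradientAt_sub_const_mul
      ((hu.contDiffAt hΩ hy ht).differentiableAt two_ne_zero).hasGradientAt
      (hg.contDiff.contDiffAt.differentiableAt two_ne_zero).hasGradientAt ε
  have hinner : 0 ≤ ⟪sgrad u x t - ε • gradient g x, ν x⟫ :=
    inner_nonneg_of_isMaxOn_closure (G := fun y => sgrad u y t - ε • gradient g y) hν hmax hcont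
      ((hu.grad_cont t ht).sub (hgradcont.const_smul ε).continuousOn) hgrad
  rw [inner_sub_left, real_inner_smul_left] at hinner
  linarith [hu.neumann_le t ht x hx, mul_pos hε (hg.inner_pos x hx)]

lemma deriv_le_of_isLocalMax (hu : IsMCFSubsolution Ω ν F u T) (hΩ : IsOpen Ω) {g : Eucl n → ℝ}
    (hg : ContDiff ℝ 2 g) {x : Eucl n} (hx : x ∈ Ω) {t : ℝ} (ht : t ∈ Ioo 0 T) {ε : ℝ}
    (hε : 0 ≤ ε) (hmax : IsLocalMax (fun y => u y t - ε * g y) x) :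
    deriv (u x) t ≤ F + ε * (n * ‖fderiv ℝ (gradient g) x‖ + |F| * ‖gradient g x‖) := by
  have hu₂ := hu.contDiffAt hΩ hx ht
  have hg₂ : ContDiffAt ℝ 2 g x := hg.contDiffAt
  have hgrad : sgrad u x t = ε • gradient g x :=
    eq_smul_of_isLocalMax_sub hmax (hu₂.differentiableAt two_ne_zero).hasGradientAt
      (hg₂.differentiableAt two_ne_zero).hasGradientAt
  have hnorm : ‖sgrad u x t‖ = ε * ‖gradient g x‖ := by
    rw [hgrad, norm_smul, Real.norm_of_nonneg hε]
  have hhess := inner_apply_self_le_of_isLocalMax_sub hε hmax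
    (eventually_hasGradientAt hu₂ one_le_two) (eventually_hasGradientAt hg₂ one_le_two)
    (hasFDerivAt_gradient hu₂) (hasFDerivAt_gradient hg₂)
  have hop := meanCurvatureOp_le_of_inner_le (by positivity) hhess (sgrad u x t)
  have hvel := mul_vel_le F u x t
  rw [finrank_euclideanSpace_fin] at hop
  rw [hnorm] at hvel
  linarith [hu.deriv_le hx ht (hasFDerivAt_gradient hu₂)]

lemma eq_zero_of_isMaxOn (hu : IsMCFSubsolution Ω ν F u T) (hΩ : IsOpen Ω) {g : Eucl n → ℝ}
    (hg : IsNeumannBarrier Ω ν g) (hν : ∀ x ∈ frontier Ω, PointsOutward Ω x (ν x))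
    {ε c τ : ℝ} (hε : 0 < ε) (hτ : τ < T)
    (hc : ∀ x ∈ Ω, F + ε * (n * ‖fderiv ℝ (gradient g) x‖ + |F| * ‖gradient g x‖) < c)
    {x : Eucl n} {t : ℝ} (hx : x ∈ closure Ω) (ht : t ∈ Icc 0 τ)
    (hmax : IsMaxOn (fun p : Eucl n × ℝ => u p.1 p.2 - ε * g p.1 - c * p.2)
      (closure Ω ×ˢ Icc 0 τ) (x, t)) : t = 0 := by
  by_contra ht₀
  have htpos : 0 < t := lt_of_le_of_ne' ht.1 ht₀
  have htT : t ∈ Ioo 0 T := ⟨htpos, ht.2.trans_lt hτ⟩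
  have hspace : IsMaxOn (fun y => u y t - ε * g y) (closure Ω) x := fun y hy => by
    simpa using isMaxOn_iff.1 hmax (y, t) ⟨hy, ht⟩
  by_cases hxΩ : x ∈ Ω
  · have htime : IsMaxOn (fun s => u x s - ε * g x - c * s) (Icc 0 t) t := fun s hs =>
      isMaxOn_iff.1 hmax (x, s) ⟨hx, hs.1, hs.2.trans ht.2⟩
    have hderiv : HasDerivAt (fun s => u x s - ε * g x - c * s) (deriv (u x) t - c) t := by
      simpa using ((hu.reg_t x hxΩ t htT).hasDerivAt.sub_const (ε * g x)).fun_sub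
        ((hasDerivAt_id t).const_mul c)
    have hlocal : IsLocalMax (fun y => u y t - ε * g y) x :=
      hspace.isLocalMax (mem_of_superset (hΩ.mem_nhds hxΩ) subset_closure)
    linarith [nonneg_of_isMaxOn_Icc_right htpos htime hderiv, hc x hxΩ,
      hu.deriv_le_of_isLocalMax hΩ hg.contDiff hxΩ htT hε.le hlocal]
  · have hfrontier : x ∈ frontier Ω := hΩ.frontier_eq ▸ ⟨hx, hxΩ⟩
    exact hu.not_isMaxOn_of_mem_frontier hΩ hg hfrontier (hν x hfrontier) htT hε hspace

lemma sub_le (hu : IsMCFSubsolution Ω ν F u T) (hΩ : IsOpen Ω) (hbdd : Bornology.IsBounded Ω)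
    {g : Eucl n → ℝ} (hg : IsNeumannBarrier Ω ν g)
    (hν : ∀ x ∈ frontier Ω, PointsOutward Ω x (ν x)) {ε c S : ℝ} (hε : 0 < ε)
    (hc : ∀ x ∈ Ω, F + ε * (n * ‖fderiv ℝ (gradient g) x‖ + |F| * ‖gradient g x‖) < c)
    (hS : ∀ x ∈ closure Ω, u x 0 - ε * g x ≤ S)
    {x : Eucl n} (hx : x ∈ closure Ω) {t : ℝ} (ht : t ∈ Ico 0 T) :
    u x t - ε * g x - c * t ≤ S := by
  have hcont : ContinuousOn (fun p : Eucl n × ℝ => u p.1 p.2 - ε * g p.1 - c * p.2)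
      (closure Ω ×ˢ Icc 0 t) := by
    have hu' := hu.cont.mono (prod_mono_right (Icc_subset_Icc_right ht.2.le))
    have hg' := hg.contDiff.continuous
    fun_prop
  have hxt : (x, t) ∈ closure Ω ×ˢ Icc 0 t := ⟨hx, ht.1, le_rfl⟩
  obtain ⟨⟨y, s⟩, ⟨hy, hs⟩, hmax⟩ :=
    (hbdd.isCompact_closure.prod isCompact_Icc).exists_isMaxOn ⟨_, hxt⟩ hcont
  obtain rfl : s = 0 := hu.eq_zero_of_isMaxOn hΩ hg hν hε ht.2 hc hy hs hmax
  calc u x t - ε * g x - c * t ≤ u y 0 - ε * g y - c * 0 := isMaxOn_iff.1 hmax _ hxt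
    _ ≤ S := by simpa using hS y hy

lemma le_mul_add (hu : IsMCFSubsolution Ω ν F u T) (hΩ : IsOpen Ω)
    (hbdd : Bornology.IsBounded Ω) {g : Eucl n → ℝ} (hg : IsNeumannBarrier Ω ν g)
    (hν : ∀ x ∈ frontier Ω, PointsOutward Ω x (ν x)) {S : ℝ} (hS : ∀ x ∈ Ω, u x 0 ≤ S)
    {x : Eucl n} (hx : x ∈ closure Ω) {t : ℝ} (ht : t ∈ Ico 0 T) : u x t ≤ F * t + S := by
  have hgrad : ContDiff ℝ 1 (gradient g) := contDiff_iff_contDiffAt.2 fun y =>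
    contDiffAt_gradient hg.contDiff.contDiffAt (by norm_num)
  have hD : Continuous fun y => n * ‖fderiv ℝ (gradient g) y‖ + |F| * ‖gradient g y‖ := by
    have hgrad₀ := hgrad.continuous
    fun_prop
  obtain ⟨K, hK⟩ := hbdd.isCompact_closure.bddAbove_image hD.continuousOn
  obtain ⟨M, hM⟩ := hbdd.isCompact_closure.exists_bound_of_continuousOn
    hg.contDiff.continuous.continuousOn
  have hS' : ∀ y ∈ closure Ω, u y 0 ≤ S := fun y hy => le_on_closure hS
    (hu.continuousOn_slice ⟨le_rfl, ht.1.trans ht.2.le⟩) continuousOn_const hy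
  have happrox : ∀ ε > 0, u x t ≤ F * t + S + ε * ((K + 1) * t + g x + M) := by
    intro ε hε
    have hle := hu.sub_le hΩ hbdd hg hν (c := F + ε * (K + 1)) (S := S + ε * M) hε
      (fun y hy => ?_) (fun y hy => ?_) hx ht
    · linarith
    · gcongr F + ε * ?_
      exact (hK (mem_image_of_mem _ (subset_closure hy))).trans_lt (lt_add_one K)
    · nlinarith [hS' y hy, neg_le_of_abs_le (hM y hy)]
  have hlim : Tendsto (fun ε : ℝ => F * t + S + ε * ((K + 1) * t + g x + M)) (𝓝[>] 0)
      (𝓝 (F * t + S)) := by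
    refine Tendsto.mono_left ?_ nhdsWithin_le_nhds
    exact Continuous.tendsto' (by fun_prop) _ _ (by simp)
  exact ge_of_tendsto hlim (eventually_mem_nhdsWithin.mono happrox)

end IsMCFSubsolution

end Subsolution

namespace IsMCFSolution

variable {Ω : Set (Eucl n)} {f : Eucl n → ℝ → ℝ → Eucl (n + 1)} {u₀ : Eucl n → ℝ}
  {u : Eucl n → ℝ → ℝ} {F T : ℝ}

lemma isMCFSubsolution (hsol : IsMCFSolution Ω f u₀ u T)
    (hf : ∀ x ∈ Ω, ∀ t ∈ Ioo (0 : ℝ) T, ‖f x (u x t) t‖ ≤ F) :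
    IsMCFSubsolution Ω (outNormal Ω) F u T where
  reg_x := hsol.reg_x
  reg_t := hsol.reg_t
  cont := hsol.cont
  grad_cont := hsol.grad_cont
  pde_le x hx t ht := by
    rw [hsol.pde x hx t ht]
    gcongr
    exact (le_abs_self _).trans ((abs_fdotn_le_norm f u x t).trans (hf x hx t ht))
  neumann_le t ht x hx := (hsol.neumann t ht x hx).le

lemma isMCFSubsolution_neg (hsol : IsMCFSolution Ω f u₀ u T)
    (hf : ∀ x ∈ Ω, ∀ t ∈ Ioo (0 : ℝ) T, ‖f x (u x t) t‖ ≤ F) :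
    IsMCFSubsolution Ω (outNormal Ω) F (fun x t => -u x t) T where
  reg_x t ht := (hsol.reg_x t ht).neg
  reg_t x hx t ht := (hsol.reg_t x hx t ht).neg
  cont := hsol.cont.neg
  grad_cont t ht := by
    simpa only [sgrad_neg] using (hsol.grad_cont t ht).fun_neg
  pde_le x hx t ht := by
    have hfdotn := (neg_le_abs _).trans ((abs_fdotn_le_norm f u x t).trans (hf x hx t ht))
    simp only [sgrad_neg, vel_neg, smul_neg]
    rw [divg_neg, deriv.fun_neg, neg_div, hsol.pde x hx t ht]
    linarith
  neumann_le t ht x hx := by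
    rw [sgrad_neg, inner_neg_left, hsol.neumann t ht x hx, neg_zero]

end IsMCFSolution

theorem sup_bound_general {Ω : Set (Eucl n)} (hΩ : IsOpen Ω) (hbdd : Bornology.IsBounded Ω)
    (hsdist : ∀ x ∈ frontier Ω, ContDiffAt ℝ 2 (sdist Ω) x)
    {f : Eucl n → ℝ → ℝ → Eucl (n + 1)} {u₀ : Eucl n → ℝ} {u : Eucl n → ℝ → ℝ} {F S T : ℝ}
    (hsol : IsMCFSolution Ω f u₀ u T)
    (hf : ∀ x ∈ Ω, ∀ t ∈ Ioo (0 : ℝ) T, ‖f x (u x t) t‖ ≤ F) (hS : ∀ x ∈ Ω, |u₀ x| ≤ S) :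
    ∀ x ∈ closure Ω, ∀ t ∈ Ico (0 : ℝ) T, |u x t| ≤ F * t + S := by
  intro x hx t ht
  obtain ⟨g, hg⟩ := exists_isNeumannBarrier_outNormal hΩ hsdist
  have hν : ∀ y ∈ frontier Ω, PointsOutward Ω y (outNormal Ω y) := fun y hy =>
    pointsOutward_outNormal hΩ hy ((hsdist y hy).of_le one_le_two)
  have hinit : ∀ y ∈ Ω, |u y 0| ≤ S := fun y hy => hsol.init y (subset_closure hy) ▸ hS y hy
  have hupper := (hsol.isMCFSubsolution hf).le_mul_add hΩ hbdd hg hν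
    (fun y hy => le_of_abs_le (hinit y hy)) hx ht
  have hlower := (hsol.isMCFSubsolution_neg hf).le_mul_add hΩ hbdd hg hν
    (fun y hy => neg_le.1 (neg_le_of_abs_le (hinit y hy))) hx ht
  exact abs_le'.2 ⟨hupper, hlower⟩

/-- sup bound for solutions via comparison. -/
theorem sup_bound
    (n : ℕ) (T : ℝ) (hT : 0 < T)
    (Ω : Set (Eucl n)) (hΩopen : IsOpen Ω) (hΩbdd : Bornology.IsBounded Ω)
    (hΩsmooth : SmoothBoundary Ω)
    (f : Eucl n → ℝ → ℝ → Eucl (n + 1))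
    (hfcont : Continuous (fun P : Eucl n × ℝ × ℝ => f P.1 P.2.1 P.2.2))
    (u₀ : Eucl n → ℝ) (u : Eucl n → ℝ → ℝ)
    (hsol : IsMCFSolution Ω f u₀ u T)
    (F S : ℝ)
    -- `sup_{Ω×ℝ×[0,T]} |f⃗| ≤ F`  (boundedness of the transport term)
    (hF : ∀ x ∈ Ω, ∀ z : ℝ, ∀ t ∈ Icc (0 : ℝ) T, ‖f x z t‖ ≤ F)
    -- `sup_Ω |u₀| ≤ S`
    (hS : ∀ x ∈ Ω, |u₀ x| ≤ S) :
    ∀ x ∈ Ω, ∀ t ∈ Ioo (0 : ℝ) T, |u x t| ≤ F * T + S := by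
  intro x hx t ht
  have hF₀ : 0 ≤ F := (norm_nonneg _).trans (hF x hx 0 0 (left_mem_Icc.2 hT.le))
  calc |u x t| ≤ F * t + S := sup_bound_general hΩopen hΩbdd
        (fun y hy => contDiffAt_infty.1 (hΩsmooth.contDiffAt hy) 2) hsol
        (fun y hy s hs => hF y hy _ s (Ioo_subset_Icc_self hs)) hS x (subset_closure hx) t
        (Ioo_subset_Ico_self ht)
    _ ≤ F * T + S := by gcongr; exact ht.2.le

end
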